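/- arXiv:2401.03636 — 2 statements merged into one kernel-verified Lean document; each statement's English description precedes it below -/
import Mathlib

section
/- Under the stated assumptions, the value function f*(x) := min_{y∈Y} f(x,y) is differentiable on X; moreover, for each x ∈ X the set {∇_x f(x,y) : y ∈ S(x)} is a singleton, and ∇f*(x) = ∇_x f(x, y₁*) for any y₁* ∈ S(x). -/
open scoped RealInnerProductSpace

noncomputable section

abbrev Eu (n : ℕ) : Type := EuclideanSpace ℝ (Fin n)

variable {n m : ℕ}

/-- Partial gradient of `f` in the first variable. -/
def gradx (f : Eu n → Eu m → ℝ) (x : Eu n) (y : Eu m) : Eu n :=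
  gradient (fun x' => f x' y) x

/-- Partial gradient of `f` in the second variable. -/
def grady (f : Eu n → Eu m → ℝ) (x : Eu n) (y : Eu m) : Eu m :=
  gradient (fun y' => f x y') y

/-- Derivative in `x` of the partial gradient in `y` (`∇_{yx} f`). -/
def gradyx (f : Eu n → Eu m → ℝ) (x : Eu n) (y : Eu m) : Eu n →L[ℝ] Eu m :=
  fderiv ℝ (fun x' => grady f x' y) x

/-- Derivative in `y` of the partial gradient in `y` (`∇_{yy} f`). -/
def gradyy (f : Eu n → Eu m → ℝ) (x : Eu n) (y : Eu m) : Eu m →L[ℝ] Eu m :=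
  fderiv ℝ (fun y' => grady f x y') y

/-- The ℓ² norm of a pair of vectors. -/
def pnorm (a : Eu n) (b : Eu m) : ℝ := Real.sqrt (‖a‖ ^ 2 + ‖b‖ ^ 2)

/-- Lower-level value function `f*`. -/
def fstar (f : Eu n → Eu m → ℝ) (Y : Set (Eu m)) (x : Eu n) : ℝ :=
  sInf ((fun y => f x y) '' Y)

/-- Lower-level solution set `S(x)`. -/
def Sopt (f : Eu n → Eu m → ℝ) (Y : Set (Eu m)) (x : Eu n) : Set (Eu m) :=
  {y ∈ Y | ∀ y' ∈ Y, f x y ≤ f x y'}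

/-- Set of ε-optimal lower-level points `S_ε(x)`. -/
def Seps (f : Eu n → Eu m → ℝ) (Y : Set (Eu m)) (ε : ℝ) (x : Eu n) : Set (Eu m) :=
  {y ∈ Y | f x y ≤ fstar f Y x + ε}

/-- Pessimistic value function `φ_ε(x) = max_{y ∈ S_ε(x)} F(x,y)`. -/
def phieps (F f : Eu n → Eu m → ℝ) (Y : Set (Eu m)) (ε : ℝ) (x : Eu n) : ℝ :=
  sSup ((fun y => F x y) '' (Seps f Y ε x))

/-- `R_ε(x) = argmax_{y ∈ S_ε(x)} F(x,y)`. -/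
def Reps (F f : Eu n → Eu m → ℝ) (Y : Set (Eu m)) (ε : ℝ) (x : Eu n) : Set (Eu m) :=
  {y ∈ Seps f Y ε x | ∀ y' ∈ Seps f Y ε x, F x y' ≤ F x y}

/-- Gradient descent iterates `y_j(x)` for the lower-level problem (stepsize `1/L₁`). -/
def yIter (f : Eu n → Eu m → ℝ) (L₁ : ℝ) (y₀ : Eu m) : ℕ → Eu n → Eu m
  | 0, _ => y₀
  | j + 1, x => yIter f L₁ y₀ j x - (1 / L₁) • grady f x (yIter f L₁ y₀ j x)

/-- Approximate lower-level value `f_J(x) = f(x, y_J(x))`. -/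
def fApp (f : Eu n → Eu m → ℝ) (L₁ : ℝ) (y₀ : Eu m) (J : ℕ) (x : Eu n) : ℝ :=
  f x (yIter f L₁ y₀ J x)

/-- Log-barrier objective `G_{ε,τ,J}`. -/
def Gfun (F f : Eu n → Eu m → ℝ) (L₁ : ℝ) (y₀ : Eu m) (ε τ : ℝ) (J : ℕ)
    (x : Eu n) (y : Eu m) : ℝ :=
  F x y + τ * Real.log (fApp f L₁ y₀ J x + ε - f x y)

/-- The set `Y_J = ∩_{z ∈ X} {y ∈ Y : f_J(z) + ε - f(z,y) ≥ c}`. -/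
def YJ (f : Eu n → Eu m → ℝ) (L₁ : ℝ) (y₀ : Eu m) (ε c : ℝ) (J : ℕ)
    (X : Set (Eu n)) (Y : Set (Eu m)) : Set (Eu m) :=
  {y ∈ Y | ∀ z ∈ X, fApp f L₁ y₀ J z + ε - f z y ≥ c}

/-- The set `Y_J(x) = {y ∈ Y : f_J(x) + ε - f(x,y) ≥ c/2}`. -/
def YJx (f : Eu n → Eu m → ℝ) (L₁ : ℝ) (y₀ : Eu m) (ε c : ℝ) (J : ℕ)
    (x : Eu n) (Y : Set (Eu m)) : Set (Eu m) :=
  {y ∈ Y | fApp f L₁ y₀ J x + ε - f x y ≥ c / 2}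

/-!
Let `y` minimise `f x` on `Y` and put `V z = inf (f z '' Y)`. For any `u ∈ Y`, the points `(z, u)`
and `(2 x - z, y)` have midpoint `(x, (u + y) / 2)`, so joint convexity and the minimality of `y`
give `2 f x y ≤ f z u + f (2 x - z) y`. Taking the infimum over `u` yields
`2 f x y - f (2 x - z) y ≤ V z ≤ f z y` for `z` near `x`. Both bounds take the value `f x y` at `x`
and have there the same derivative, that of `f · y`; hence so does `V`.
-/

section ValueFunction

open Filter Set
open scoped Gradient Topology

variable {E G : Type*} {C : Set E} {Y : Set G} {f : E → G → ℝ} {x : E} {y : G}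

theorem hasFDerivAt_of_eventually_le_of_eventually_le [NormedAddCommGroup E]
    [NormedSpace ℝ E] {g v h : E → ℝ} {L : E →L[ℝ] ℝ}
    (hg : HasFDerivAt g L x) (hh : HasFDerivAt h L x)
    (hgv : ∀ᶠ z in 𝓝 x, g z ≤ v z) (hvh : ∀ᶠ z in 𝓝 x, v z ≤ h z) (hgh : g x = h x) :
    HasFDerivAt v L x := by
  have hgx : g x = v x := le_antisymm hgv.self_of_nhds (hgh ▸ hvh.self_of_nhds)
  have hhx : h x = v x := hgh ▸ hgx
  rw [hasFDerivAt_iff_isLittleO, Asymptotics.isLittleO_iff] at hg hh ⊢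
  intro c hc
  filter_upwards [hg hc, hh hc, hgv, hvh] with z hgz hhz hgvz hvhz
  rw [Real.norm_eq_abs, abs_le] at hgz hhz ⊢
  constructor <;> linarith

theorem hasFDerivAt_two_mul_sub_comp_add_self_sub [NormedAddCommGroup E] [NormedSpace ℝ E]
    {φ : E → ℝ} {L : E →L[ℝ] ℝ} (hφ : HasFDerivAt φ L x) :
    HasFDerivAt (fun z => 2 * φ x - φ (x + x - z)) L x := by
  have hcomp := ((add_sub_cancel_right x x).symm ▸ hφ : HasFDerivAt φ L (x + x - x)).comp x
    ((hasFDerivAt_id x).const_sub (x + x))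
  simpa using hcomp.const_sub (2 * φ x)

theorem eventually_add_self_sub_mem [TopologicalSpace E] [AddCommGroup E] [IsTopologicalAddGroup E]
    (hC : C ∈ 𝓝 x) : ∀ᶠ z in 𝓝 x, x + x - z ∈ C := by
  have hcont : ContinuousAt (fun z => x + x - z) x := by fun_prop
  exact hcont.preimage_mem_nhds (by rwa [add_sub_cancel_right])

theorem two_mul_sub_add_self_sub_le_of_isMinOn [AddCommGroup E] [Module ℝ E]
    [AddCommGroup G] [Module ℝ G] {z : E} {u : G}
    (hf : ConvexOn ℝ (C ×ˢ Y) fun p : E × G => f p.1 p.2)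
    (hz : z ∈ C) (hz' : x + x - z ∈ C) (hy : y ∈ Y) (hmin : IsMinOn (f x) Y y) (hu : u ∈ Y) :
    2 * f x y - f (x + x - z) y ≤ f z u := by
  have hzu : (z, u) ∈ C ×ˢ Y := ⟨hz, hu⟩
  have hzy : (x + x - z, y) ∈ C ×ˢ Y := ⟨hz', hy⟩
  have half_nonneg : (0 : ℝ) ≤ 1 / 2 := by norm_num
  have hmid : (1 / 2 : ℝ) • z + (1 / 2 : ℝ) • (x + x - z) = x := by module
  have hmem := (hf.1 hzu hzy half_nonneg half_nonneg (add_halves 1)).2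
  have hconv := hf.2 hzu hzy half_nonneg half_nonneg (add_halves 1)
  simp only [Prod.fst_add, Prod.snd_add, Prod.smul_fst, Prod.smul_snd, hmid, smul_eq_mul]
    at hmem hconv
  have hle : f x y ≤ f x ((1 / 2 : ℝ) • u + (1 / 2 : ℝ) • y) := hmin hmem
  linarith

theorem hasFDerivAt_sInf_image_of_isMinOn [NormedAddCommGroup E] [NormedSpace ℝ E]
    [AddCommGroup G] [Module ℝ G] {L : E →L[ℝ] ℝ} (hC : C ∈ 𝓝 x)
    (hf : ConvexOn ℝ (C ×ˢ Y) fun p : E × G => f p.1 p.2)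
    (hy : y ∈ Y) (hmin : IsMinOn (f x) Y y) (hderiv : HasFDerivAt (f · y) L x) :
    HasFDerivAt (fun z => sInf (f z '' Y)) L x := by
  have hlower : ∀ᶠ z in 𝓝 x, 2 * f x y - f (x + x - z) y ∈ lowerBounds (f z '' Y) := by
    filter_upwards [hC, eventually_add_self_sub_mem hC] with z hz hz'
    exact forall_mem_image.2 fun u hu => two_mul_sub_add_self_sub_le_of_isMinOn hf hz hz' hy hmin hu
  refine hasFDerivAt_of_eventually_le_of_eventually_le
    (hasFDerivAt_two_mul_sub_comp_add_self_sub hderiv) hderiv ?_ ?_ ?_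
  · filter_upwards [hlower] with z hz
    exact le_csInf ⟨_, mem_image_of_mem (f z) hy⟩ hz
  · filter_upwards [hlower] with z hz
    exact csInf_le ⟨_, hz⟩ (mem_image_of_mem (f z) hy)
  · rw [add_sub_cancel_right]
    ring

theorem exists_isMinOn_of_continuousOn_prod [TopologicalSpace E] [TopologicalSpace G]
    (hY : IsCompact Y) (hYne : Y.Nonempty)
    (hf : ContinuousOn (fun p : E × G => f p.1 p.2) (C ×ˢ Y)) (hx : x ∈ C) :
    ∃ y ∈ Y, IsMinOn (f x) Y y :=
  hY.exists_isMinOn hYne (hf.uncurry_left x hx)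

theorem differentiableAt_left_of_differentiableOn_prod [NormedAddCommGroup E]
    [NormedSpace ℝ E] [NormedAddCommGroup G] [NormedSpace ℝ G] (hC : C ∈ 𝓝 x)
    (hf : DifferentiableOn ℝ (fun p : E × G => f p.1 p.2) (C ×ˢ Y)) (hy : y ∈ Y) :
    DifferentiableAt ℝ (f · y) x := by
  have hslice : DifferentiableOn ℝ (f · y) C :=
    hf.comp (f := fun z => (z, y)) (by fun_prop) fun z hz => ⟨hz, hy⟩
  exact hslice.differentiableAt hC

theorem stmt0_general [NormedAddCommGroup E] [InnerProductSpace ℝ E] [CompleteSpace E]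
    [AddCommGroup G] [Module ℝ G] {X : Set E}
    (hXC : ∀ x ∈ X, C ∈ 𝓝 x) (hf : ConvexOn ℝ (C ×ˢ Y) fun p : E × G => f p.1 p.2)
    (hdiff : ∀ x ∈ X, ∀ y ∈ Y, IsMinOn (f x) Y y → DifferentiableAt ℝ (f · y) x)
    (hmin : ∀ x ∈ X, ∃ y ∈ Y, IsMinOn (f x) Y y) :
    (∀ x ∈ X, DifferentiableAt ℝ (fun z => sInf (f z '' Y)) x) ∧
      ∀ x ∈ X, (fun y => ∇ (f · y) x) '' {y ∈ Y | IsMinOn (f x) Y y} =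
        {∇ (fun z => sInf (f z '' Y)) x} := by
  have hgrad : ∀ x ∈ X, ∀ y ∈ Y, IsMinOn (f x) Y y →
      HasGradientAt (fun z => sInf (f z '' Y)) (∇ (f · y) x) x := fun x hx y hy hxy =>
    hasFDerivAt_sInf_image_of_isMinOn (hXC x hx) hf hy hxy
      (hdiff x hx y hy hxy).hasGradientAt.hasFDerivAt
  refine ⟨fun x hx => ?_, fun x hx => ?_⟩
  · obtain ⟨y, hy, hxy⟩ := hmin x hx
    exact (hgrad x hx y hy hxy).differentiableAt
  · refine eq_singleton_iff_nonempty_unique_mem.2 ⟨Nonempty.image _ (hmin x hx), ?_⟩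
    exact forall_mem_image.2 fun y hy => (hgrad x hx y hy.1 hy.2).gradient.symm

end ValueFunction

/-- Proposition 1: under Assumptions 1 and 2, the lower-level value
function `f*` is differentiable on `X`; moreover for each `x ∈ X` the set
`{∇ₓ f(x,y) : y ∈ S(x)}` is the singleton `{∇ f*(x)}`, i.e. `∇ f*(x) = ∇ₓ f(x, y₁*)`
for every `y₁* ∈ S(x)`. -/
theorem stmt0 {n m : ℕ} (X C : Set (Eu n)) (Y : Set (Eu m)) (H M μ : ℝ)
    (F f : Eu n → Eu m → ℝ)
    (hXne : X.Nonempty) (hXconv : Convex ℝ X) (hXcomp : IsCompact X)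
    (hYne : Y.Nonempty) (hYconv : Convex ℝ Y) (hYcomp : IsCompact Y)
    (hH : 0 < H) (hM : 1 < M)
    (hXbd : ∀ x ∈ X, ‖x‖ ≤ H) (hYbd : ∀ y ∈ Y, ‖y‖ ≤ M)
    (hXC : X ⊆ C) (hCopen : IsOpen C) (hCconv : Convex ℝ C)
    (hFC2 : ContDiffOn ℝ 2 (fun p : Eu n × Eu m => F p.1 p.2) (C ×ˢ Y))
    (hfC2 : ContDiffOn ℝ 2 (fun p : Eu n × Eu m => f p.1 p.2) (C ×ˢ Y))
    (hμ : 0 < μ) (hFconc : ∀ x ∈ X, StrongConcaveOn Y μ (F x))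
    (hfconv : ConvexOn ℝ (C ×ˢ Y) (fun p : Eu n × Eu m => f p.1 p.2)) :
    DifferentiableOn ℝ (fstar f Y) X ∧
      ∀ x ∈ X, (fun y => gradx f x y) '' (Sopt f Y x) = {gradient (fstar f Y) x} := by
  have hC : ∀ x ∈ X, C ∈ nhds x := fun x hx => hCopen.mem_nhds (hXC hx)
  obtain ⟨hdiff, hgrad⟩ := stmt0_general hC hfconv
    (fun x hx y hy _ => differentiableAt_left_of_differentiableOn_prod (hC x hx)
      (hfC2.differentiableOn two_ne_zero) hy)
    fun x hx => exists_isMinOn_of_continuousOn_prod hYcomp hYne hfC2.continuousOn (hXC hx)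
  exact ⟨fun x hx => (hdiff x hx).differentiableWithinAt, hgrad⟩

end
end

section
/- Let x̄ ∈ X. If for every ȳ ∈ R_ε(x̄) the pair (x̄, ȳ) is a local optimal solution of the standard problem SPBPε (min F(x,y) subject to x ∈ X, y ∈ R_ε(x)), then x̄ is a local optimal solution of the perturbed pessimistic bilevel problem PBPε (min_{x∈X} φ_ε(x)). -/
open scoped RealInnerProductSpace

noncomputable section

variable {n m : ℕ}

/-!
If `ȳ ∈ Y` is not in `R_ε(x̄)`, then `y ∉ R_ε(x)` for all `(x, y)` near `(x̄, ȳ)`. The only delicate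
case is `ȳ ∈ S_ε(x̄)`: a point of `S_ε(x̄)` beating `ȳ` can be moved slightly towards a minimizer of
`f(x̄, ·)`, which by convexity makes its constraint strict, hence stable under perturbation of `x̄`.
If `ȳ ∈ R_ε(x̄)`, local optimality of `(x̄, ȳ)` gives `φ_ε(x̄) ≤ F(x, y)` for feasible `(x, y)` near
`(x̄, ȳ)`. By compactness of `Y` these neighbourhoods may be chosen uniformly in `ȳ`, so that
`φ_ε(x̄) ≤ F(x, y) = φ_ε(x)` for all `x` near `x̄` and `y ∈ R_ε(x)`.
-/

open Set Filter Topology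

section Correspondence

variable {E V : Type*} [TopologicalSpace E] [TopologicalSpace V]
  {X : Set E} {Y : Set V} {S : E → Set V} {x₀ : E}

/-- The correspondence `S` is *closed* at `x₀`, relative to `X` and `Y`: every `y ∈ Y` outside
`S x₀` has a neighbourhood in `Y` that is disjoint from `S x` for all `x ∈ X` near `x₀`. It is the
pointwise form of `S` having a closed graph in `X × Y`. -/
def ClosedCorrespondenceWithinAt (S : E → Set V) (X : Set E) (Y : Set V) (x₀ : E) : Prop :=
  ∀ y ∈ Y, y ∉ S x₀ → ∀ᶠ p in 𝓝[X ×ˢ Y] (x₀, y), p.2 ∉ S p.1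

lemma eventually_nhdsWithin_forall_of_isCompact (hY : IsCompact Y) {P : E × V → Prop}
    (hP : ∀ y ∈ Y, ∀ᶠ p in 𝓝[X ×ˢ Y] (x₀, y), P p) :
    ∀ᶠ x in 𝓝[X] x₀, ∀ y ∈ Y, P (x, y) := by
  have h : ∀ᶠ x in 𝓝 x₀, ∀ y ∈ Y, (x, y) ∈ X ×ˢ Y → P (x, y) :=
    hY.eventually_forall_of_forall_eventually fun y hy => eventually_nhdsWithin_iff.1 (hP y hy)
  exact eventually_nhdsWithin_iff.2 (h.mono fun x hx hxX y hy => hx y hy ⟨hxX, hy⟩)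

lemma ClosedCorrespondenceWithinAt.eventually_forall_mem
    (hS : ClosedCorrespondenceWithinAt S X Y x₀) (hY : IsCompact Y) (hSY : ∀ x, S x ⊆ Y)
    {P : E × V → Prop}
    (hP : ∀ y ∈ S x₀, ∀ᶠ p in 𝓝[{p | p.1 ∈ X ∧ p.2 ∈ S p.1}] (x₀, y), P p) :
    ∀ᶠ x in 𝓝[X] x₀, ∀ y ∈ S x, P (x, y) := by
  have hlocal : ∀ y ∈ Y, ∀ᶠ p in 𝓝[X ×ˢ Y] (x₀, y), p.2 ∈ S p.1 → P p := by
    intro y hy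
    by_cases hyS : y ∈ S x₀
    · filter_upwards [nhdsWithin_le_nhds (eventually_nhdsWithin_iff.1 (hP y hyS)),
        self_mem_nhdsWithin] with p hp hpXY hpS using hp ⟨hpXY.1, hpS⟩
    · exact (hS y hy hyS).mono fun p hp hpS => absurd hpS hp
  exact (eventually_nhdsWithin_forall_of_isCompact hY hlocal).mono
    fun x hx y hy => hx y (hSY x hy) hy

lemma ClosedCorrespondenceWithinAt.isCompact (hS : ClosedCorrespondenceWithinAt S X Y x₀)
    (hx₀ : x₀ ∈ X) (hY : IsCompact Y) (hSY : S x₀ ⊆ Y) : IsCompact (S x₀) := by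
  suffices S x₀ = Y ∩ closure (S x₀) from this ▸ hY.inter_right isClosed_closure
  refine (subset_inter hSY subset_closure).antisymm ?_
  rintro y ⟨hy, hyc⟩
  by_contra hyS
  have hslice : Tendsto (fun y' => (x₀, y')) (𝓝[Y] y) (𝓝[X ×ˢ Y] (x₀, y)) :=
    ContinuousWithinAt.tendsto_nhdsWithin (by fun_prop) fun y' hy' => ⟨hx₀, hy'⟩
  have hnot : ∀ᶠ y' in 𝓝[Y] y, y' ∉ S x₀ := hslice.eventually (hS y hy hyS)
  obtain ⟨y', hy'S, hy'⟩ :=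
    ((mem_closure_iff_frequently.1 hyc).and_eventually (eventually_nhdsWithin_iff.1 hnot)).exists
  exact hy' (hSY hy'S) hy'S

lemma eventually_exists_mem_of_lowerHemicontinuousWithinAt
    (hS : LowerHemicontinuousWithinAt S X x₀) (hSY : ∀ x, S x ⊆ Y) {y : V} (hy : y ∈ S x₀)
    {P : E × V → Prop} (hP : ∀ᶠ p in 𝓝[X ×ˢ Y] (x₀, y), P p) :
    ∀ᶠ x in 𝓝[X] x₀, ∃ w ∈ S x, P (x, w) := by
  obtain ⟨A, hA, B, hB, hAB⟩ := mem_nhdsWithin_prod_iff.1 hP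
  obtain ⟨U, hU, hyU, hUB⟩ := mem_nhdsWithin.1 hB
  have hmeet : ∀ᶠ x in 𝓝[X] x₀, (S x ∩ U).Nonempty :=
    (hS U ⟨hU, y, hy, hyU⟩).mono fun _ hx => hx.2
  filter_upwards [hA, hmeet] with x hxA ⟨w, hwS, hwU⟩
  exact ⟨w, hwS, hAB ⟨hxA, hUB ⟨hwU, hSY x hwS⟩⟩⟩

end Correspondence

section Argmax

variable {V α : Type*}

/-- The set of maximizers of `g` over `s`; the paper's `R_ε(x)` is `argmaxOn S_ε(x) F(x, ·)`. -/
def argmaxOn [LE α] (s : Set V) (g : V → α) : Set V :=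
  {y ∈ s | ∀ y' ∈ s, g y' ≤ g y}

lemma sSup_image_eq_of_mem_argmaxOn [ConditionallyCompleteLattice α] {s : Set V} {g : V → α}
    {y : V} (hy : y ∈ argmaxOn s g) : sSup (g '' s) = g y :=
  IsGreatest.csSup_eq ⟨mem_image_of_mem g hy.1, forall_mem_image.2 hy.2⟩

variable [TopologicalSpace V] [LinearOrder α] [TopologicalSpace α]

lemma argmaxOn_nonempty [ClosedIciTopology α] {s : Set V} {g : V → α} (hs : IsCompact s)
    (hne : s.Nonempty) (hg : ContinuousOn g s) : (argmaxOn s g).Nonempty :=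
  hs.exists_isMaxOn hne hg

variable {E : Type*} [TopologicalSpace E] {X : Set E} {Y : Set V} {S : E → Set V}
  {F : E → V → α} {x₀ : E}

lemma ClosedCorrespondenceWithinAt.argmaxOn [OrderClosedTopology α]
    (hclosed : ClosedCorrespondenceWithinAt S X Y x₀)
    (hlower : LowerHemicontinuousWithinAt S X x₀) (hSY : ∀ x, S x ⊆ Y) (hx₀ : x₀ ∈ X)
    (hF : ContinuousOn F.uncurry (X ×ˢ Y)) :
    ClosedCorrespondenceWithinAt (fun x => argmaxOn (S x) (F x)) X Y x₀ := by
  intro y hy hyR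
  by_cases hyS : y ∈ S x₀
  · obtain ⟨y', hy'S, hlt⟩ : ∃ y' ∈ S x₀, F x₀ y < F x₀ y' := by
      by_contra! hmax
      exact hyR ⟨hyS, hmax⟩
    obtain ⟨a, hya, b, hby', hab⟩ := hlt.exists_disjoint_Iio_Ioi
    have hFa : ∀ᶠ p in 𝓝[X ×ˢ Y] (x₀, y), F p.1 p.2 < a :=
      (hF (x₀, y) ⟨hx₀, hy⟩).eventually_lt_const hya
    have hFb : ∀ᶠ p in 𝓝[X ×ˢ Y] (x₀, y'), b < F p.1 p.2 :=
      (hF (x₀, y') ⟨hx₀, hSY x₀ hy'S⟩).eventually_const_lt hby'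
    have hbetter : ∀ᶠ x in 𝓝[X] x₀, ∃ w ∈ S x, b < F x w :=
      eventually_exists_mem_of_lowerHemicontinuousWithinAt hlower hSY hy'S hFb
    have hfst : Tendsto Prod.fst (𝓝[X ×ˢ Y] (x₀, y)) (𝓝[X] x₀) :=
      nhdsWithin_prod_eq x₀ y X Y ▸ tendsto_fst
    filter_upwards [hFa, hfst.eventually hbetter] with p hpa ⟨w, hwS, hwb⟩ hpR
    exact (hab _ hpa _ hwb).not_ge (hpR.2 w hwS)
  · exact (hclosed y hy hyS).mono fun p hp hpR => hp hpR.1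

end Argmax

section EpsArgmin

/-- The set of `ε`-minimizers of `g` over `s`; the paper's `S_ε(x)` is `epsArgmin Y ε f(x, ·)`. As
for any real infimum, `sInf (g '' s)` is the junk value `0` if `g` is not bounded below on `s`. -/
def epsArgmin {V : Type*} (s : Set V) (ε : ℝ) (g : V → ℝ) : Set V :=
  {y ∈ s | g y ≤ sInf (g '' s) + ε}

lemma epsArgmin_subset {V : Type*} (s : Set V) (ε : ℝ) (g : V → ℝ) : epsArgmin s ε g ⊆ s :=
  fun _ hy => hy.1

lemma exists_lt_sInf_image_add {V : Type*} {s : Set V} {ε : ℝ} (hs : s.Nonempty) (hε : 0 < ε)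
    (g : V → ℝ) : ∃ z ∈ s, g z < sInf (g '' s) + ε :=
  exists_mem_image.1 (Real.lt_sInf_add_pos (hs.image g) hε)

lemma convexOn_sublevel_subset_closure_strictSublevel {V : Type*} [AddCommGroup V] [Module ℝ V]
    [TopologicalSpace V] [ContinuousAdd V] [ContinuousSMul ℝ V] {s : Set V} {g : V → ℝ}
    (hg : ConvexOn ℝ s g) {r : ℝ} {z : V} (hz : z ∈ s) (hzr : g z < r) :
    {y ∈ s | g y ≤ r} ⊆ closure {y ∈ s | g y < r} := by
  rintro y ⟨hy, hyr⟩
  have hseg : openSegment ℝ z y ⊆ {y ∈ s | g y < r} := by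
    rintro _ ⟨a, b, ha, hb, hab, rfl⟩
    refine ⟨hg.1 hz hy ha.le hb.le hab, ?_⟩
    calc g (a • z + b • y) ≤ a * g z + b * g y := hg.2 hz hy ha.le hb.le hab
      _ < a * r + b * r := add_lt_add_of_lt_of_le (by gcongr) (by gcongr)
      _ = r := by rw [← add_mul, hab, one_mul]
  exact closure_mono hseg (segment_subset_closure_openSegment (right_mem_segment ℝ z y))

lemma convexOn_uncurry_left {𝕜 E V β : Type*} [Field 𝕜] [LinearOrder 𝕜] [AddCommGroup E]
    [AddCommGroup V] [AddCommMonoid β] [PartialOrder β] [Module 𝕜 E] [Module 𝕜 V] [SMul 𝕜 β]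
    {C : Set E} {Y : Set V} {f : E → V → β} (hf : ConvexOn 𝕜 (C ×ˢ Y) f.uncurry) {x : E}
    (hx : x ∈ C) : ConvexOn 𝕜 Y (f x) := by
  have h := hf.comp_affineMap ((AffineMap.const 𝕜 V x).prod (AffineMap.id 𝕜 V))
  exact mk_preimage_prod_right (t := Y) hx ▸ h

variable {E V : Type*} [TopologicalSpace E] [TopologicalSpace V]
  {X : Set E} {Y : Set V} {f : E → V → ℝ} {ε : ℝ} {x₀ : E}

lemma closedCorrespondenceWithinAt_epsArgmin (hY : IsCompact Y) (hx₀ : x₀ ∈ X)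
    (hf : ContinuousOn f.uncurry (X ×ˢ Y)) :
    ClosedCorrespondenceWithinAt (fun x => epsArgmin Y ε (f x)) X Y x₀ := by
  intro y hy hyS
  have hlt : sInf (f x₀ '' Y) < f x₀ y - ε := by
    by_contra! hle
    exact hyS ⟨hy, by linarith⟩
  obtain ⟨_, ⟨z, hz, rfl⟩, hzlt⟩ := exists_lt_of_csInf_lt ⟨_, mem_image_of_mem _ hy⟩ hlt
  have hfz : ContinuousOn (fun p : E × V => f p.1 z) (X ×ˢ Y) :=
    (hf.uncurry_right z hz).comp continuousOn_fst fun _ hp => hp.1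
  have hgap : ∀ᶠ p in 𝓝[X ×ˢ Y] (x₀, y), f p.1 z < f p.1 p.2 - ε :=
    (hfz _ ⟨hx₀, hy⟩).eventually_lt ((hf _ ⟨hx₀, hy⟩).sub_const ε) hzlt
  filter_upwards [hgap, self_mem_nhdsWithin] with p hp hpXY hpS
  have hinf : sInf (f p.1 '' Y) ≤ f p.1 z :=
    csInf_le (hY.bddBelow_image (hf.uncurry_left p.1 hpXY.1)) (mem_image_of_mem _ hz)
  linarith [hpS.2]

lemma eventually_mem_epsArgmin (hY : IsCompact Y) (hx₀ : x₀ ∈ X)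
    (hf : ContinuousOn f.uncurry (X ×ˢ Y)) {w : V} (hw : w ∈ Y)
    (hlt : f x₀ w < sInf (f x₀ '' Y) + ε) :
    ∀ᶠ x in 𝓝[X] x₀, w ∈ epsArgmin Y ε (f x) := by
  have hfw : ContinuousOn (fun p : E × V => f p.1 w) (X ×ˢ Y) :=
    (hf.uncurry_right w hw).comp continuousOn_fst fun _ hp => hp.1
  have hnear : ∀ y ∈ Y, ∀ᶠ p in 𝓝[X ×ˢ Y] (x₀, y), f p.1 w < f p.1 p.2 + ε := by
    intro y hy
    have hinf : sInf (f x₀ '' Y) ≤ f x₀ y :=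
      csInf_le (hY.bddBelow_image (hf.uncurry_left x₀ hx₀)) (mem_image_of_mem _ hy)
    exact (hfw _ ⟨hx₀, hy⟩).eventually_lt ((hf _ ⟨hx₀, hy⟩).add_const ε)
      (hlt.trans_le (add_le_add_left hinf ε))
  filter_upwards [eventually_nhdsWithin_forall_of_isCompact hY hnear] with x hx
  have hinf : f x w - ε ≤ sInf (f x '' Y) :=
    le_csInf ⟨_, mem_image_of_mem _ hw⟩
      (forall_mem_image.2 fun y hy => sub_le_iff_le_add.2 (hx y hy).le)
  exact ⟨hw, sub_le_iff_le_add.1 hinf⟩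

lemma lowerHemicontinuousWithinAt_epsArgmin [AddCommGroup V] [Module ℝ V] [ContinuousAdd V]
    [ContinuousSMul ℝ V] (hY : IsCompact Y) (hx₀ : x₀ ∈ X) (hε : 0 < ε)
    (hf : ContinuousOn f.uncurry (X ×ˢ Y)) (hconv : ConvexOn ℝ Y (f x₀)) :
    LowerHemicontinuousWithinAt (fun x => epsArgmin Y ε (f x)) X x₀ := by
  rintro U ⟨hU, y, hyS, hyU⟩
  obtain ⟨z, hz, hzlt⟩ := exists_lt_sInf_image_add ⟨y, hyS.1⟩ hε (f x₀)
  obtain ⟨w, hwU, hwY, hwlt⟩ :=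
    mem_closure_iff.1 (convexOn_sublevel_subset_closure_strictSublevel hconv hz hzlt hyS) U hU hyU
  filter_upwards [eventually_mem_epsArgmin hY hx₀ hf hwY hwlt] with x hx
  exact ⟨hU, w, hx, hwU⟩

end EpsArgmin

section Pessimistic

variable {E V α : Type*} [TopologicalSpace E] [TopologicalSpace V]
  [ConditionallyCompleteLinearOrder α] {X : Set E} {Y : Set V} {F : E → V → α} {x₀ : E}

lemma isLocalMinOn_sSup_image_of_isLocalMinOn_graph_argmaxOn {S : E → Set V} (hY : IsCompact Y)
    (hSY : ∀ x, S x ⊆ Y) (hx₀ : x₀ ∈ X)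
    (hne : ∀ x ∈ X, (argmaxOn (S x) (F x)).Nonempty)
    (hclosed : ClosedCorrespondenceWithinAt (fun x => argmaxOn (S x) (F x)) X Y x₀)
    (hlocal : ∀ y ∈ argmaxOn (S x₀) (F x₀),
      IsLocalMinOn F.uncurry {p | p.1 ∈ X ∧ p.2 ∈ argmaxOn (S p.1) (F p.1)} (x₀, y)) :
    IsLocalMinOn (fun x => sSup (F x '' S x)) X x₀ := by
  obtain ⟨y₀, hy₀⟩ := hne x₀ hx₀
  have hvalue : ∀ y ∈ argmaxOn (S x₀) (F x₀), F x₀ y = F x₀ y₀ := fun y hy =>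
    (hy₀.2 y hy.1).antisymm (hy.2 y₀ hy₀.1)
  have hbound : ∀ᶠ x in 𝓝[X] x₀, ∀ y ∈ argmaxOn (S x) (F x), F x₀ y₀ ≤ F x y :=
    hclosed.eventually_forall_mem (P := fun p => F x₀ y₀ ≤ F p.1 p.2) hY
      (fun x y hy => hSY x hy.1)
      fun y hy => (hlocal y hy).mono fun p hp => (hvalue y hy).symm.trans_le hp
  filter_upwards [hbound, self_mem_nhdsWithin] with x hx hxX
  obtain ⟨y, hy⟩ := hne x hxX
  calc sSup (F x₀ '' S x₀) = F x₀ y₀ := sSup_image_eq_of_mem_argmaxOn hy₀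
    _ ≤ F x y := hx y hy
    _ = sSup (F x '' S x) := (sSup_image_eq_of_mem_argmaxOn hy).symm

theorem stmt2_general [TopologicalSpace α] [OrderClosedTopology α] [AddCommGroup V] [Module ℝ V]
    [ContinuousAdd V] [ContinuousSMul ℝ V] {f : E → V → ℝ} {ε : ℝ} (hY : IsCompact Y)
    (hYne : Y.Nonempty) (hε : 0 < ε) (hx₀ : x₀ ∈ X)
    (hF : ContinuousOn F.uncurry (X ×ˢ Y)) (hf : ContinuousOn f.uncurry (X ×ˢ Y))
    (hconv : ConvexOn ℝ Y (f x₀))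
    (hlocal : ∀ y ∈ argmaxOn (epsArgmin Y ε (f x₀)) (F x₀),
      IsLocalMinOn F.uncurry
        {p | p.1 ∈ X ∧ p.2 ∈ argmaxOn (epsArgmin Y ε (f p.1)) (F p.1)} (x₀, y)) :
    IsLocalMinOn (fun x => sSup (F x '' epsArgmin Y ε (f x))) X x₀ := by
  have hSY : ∀ x, epsArgmin Y ε (f x) ⊆ Y := fun x => epsArgmin_subset Y ε (f x)
  have hclosed : ∀ x ∈ X, ClosedCorrespondenceWithinAt (fun x => epsArgmin Y ε (f x)) X Y x :=
    fun x hx => closedCorrespondenceWithinAt_epsArgmin hY hx hf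
  have hne : ∀ x ∈ X, (argmaxOn (epsArgmin Y ε (f x)) (F x)).Nonempty := by
    intro x hx
    obtain ⟨z, hz, hzlt⟩ := exists_lt_sInf_image_add hYne hε (f x)
    exact argmaxOn_nonempty ((hclosed x hx).isCompact hx hY (hSY x)) ⟨z, hz, hzlt.le⟩
      ((hF.uncurry_left x hx).mono (hSY x))
  have hlower := lowerHemicontinuousWithinAt_epsArgmin hY hx₀ hε hf hconv
  exact isLocalMinOn_sSup_image_of_isLocalMinOn_graph_argmaxOn hY hSY hx₀ hne
    ((hclosed x₀ hx₀).argmaxOn hlower hSY hx₀ hF) hlocal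

end Pessimistic

/-- Proposition 5(2): if for every `ȳ ∈ R_ε(x̄)` the pair `(x̄, ȳ)` is a
local optimal solution of the standard problem SPBPε, then `x̄` is a local optimal
solution of the perturbed pessimistic bilevel problem PBPε. -/
theorem stmt2 {n m : ℕ} (X C : Set (Eu n)) (Y : Set (Eu m)) (H M μ ε : ℝ)
    (F f : Eu n → Eu m → ℝ)
    (hXne : X.Nonempty) (hXconv : Convex ℝ X) (hXcomp : IsCompact X)
    (hYne : Y.Nonempty) (hYconv : Convex ℝ Y) (hYcomp : IsCompact Y)
    (hH : 0 < H) (hM : 1 < M)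
    (hXbd : ∀ x ∈ X, ‖x‖ ≤ H) (hYbd : ∀ y ∈ Y, ‖y‖ ≤ M)
    (hXC : X ⊆ C) (hCopen : IsOpen C) (hCconv : Convex ℝ C)
    (hFC2 : ContDiffOn ℝ 2 (fun p : Eu n × Eu m => F p.1 p.2) (C ×ˢ Y))
    (hfC2 : ContDiffOn ℝ 2 (fun p : Eu n × Eu m => f p.1 p.2) (C ×ˢ Y))
    (hμ : 0 < μ) (hFconc : ∀ x ∈ X, StrongConcaveOn Y μ (F x))
    (hfconv : ConvexOn ℝ (C ×ˢ Y) (fun p : Eu n × Eu m => f p.1 p.2))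
    (hε : 0 < ε)
    (xbar : Eu n) (hxbar : xbar ∈ X)
    (hlocal : ∀ ybar ∈ Reps F f Y ε xbar,
      IsLocalMinOn (fun p : Eu n × Eu m => F p.1 p.2)
        {p : Eu n × Eu m | p.1 ∈ X ∧ p.2 ∈ Reps F f Y ε p.1} (xbar, ybar)) :
    IsLocalMinOn (phieps F f Y ε) X xbar := by
  have hsub : X ×ˢ Y ⊆ C ×ˢ Y := prod_mono_left hXC
  exact stmt2_general hYcomp hYne hε hxbar (hFC2.continuousOn.mono hsub)
    (hfC2.continuousOn.mono hsub) (convexOn_uncurry_left hfconv (hXC hxbar)) hlocal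

end
end
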